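/- arXiv:1203.6266 — 10 statements merged into one kernel-verified Lean document; each statement's English description precedes it below -/
import Mathlib

section
/- Let x, y, a be points of the Euclidean plane and let z be a point of the segment [x, y]. Then the intersection of the closed ball centered at x with radius dist(a, x) and the closed ball centered at y with radius dist(a, y) is contained in the closed ball centered at z with radius dist(a, z). (This is the first containment used in the proof of the proposition that C(z) ⊆ C(x) ∪ C(y).) -/
open Metric

/-! For fixed `p` and `a`, the function `c ↦ dist p c ^ 2 - dist a c ^ 2` is affine in `c`, because
the quadratic terms in `c` cancel. If it is nonpositive at `x` and at `y`, it is therefore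
nonpositive on the whole segment between them. -/

theorem stmt_0 (x y a z : EuclideanSpace ℝ (Fin 2)) (hz : z ∈ segment ℝ x y) :
    closedBall x (dist a x) ∩ closedBall y (dist a y) ⊆ closedBall z (dist a z) := by
  rintro p ⟨hx, hy⟩
  obtain ⟨s, t, hs, ht, hst, rfl⟩ := hz
  obtain rfl : s = 1 - t := by linarith
  rw [mem_closedBall, EuclideanSpace.dist_eq, EuclideanSpace.dist_eq,
    Real.sqrt_le_sqrt_iff (by positivity)] at hx hy ⊢
  simp only [Fin.sum_univ_two, Real.dist_eq, sq_abs, PiLp.add_apply, PiLp.smul_apply,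
    smul_eq_mul] at hx hy ⊢
  linear_combination (1 - t) * hx + t * hy
end

section
/- Let x, y, a be points of the Euclidean plane and let z be a point of the segment [x, y]. Then the closed ball centered at z with radius dist(a, z) is contained in the union of the closed ball centered at x with radius dist(a, x) and the closed ball centered at y with radius dist(a, y). (This is the second containment used in the proof of the proposition that C(z) ⊆ C(x) ∪ C(y).) -/
open Metric

theorem stmt_1 (x y a z : EuclideanSpace ℝ (Fin 2)) (hz : z ∈ segment ℝ x y) :
    closedBall z (dist a z) ⊆ closedBall x (dist a x) ∪ closedBall y (dist a y) := by
  intro p hp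
  by_contra hcon
  simp only [Set.mem_union, mem_closedBall, not_or, not_le] at hcon hp
  obtain ⟨hx, hy⟩ := hcon
  -- The points strictly closer to `a` than to `p` form an open half-plane, because the
  -- quadratic terms in `w` cancel in `dist a w ^ 2 < dist p w ^ 2`; it is therefore convex.
  have key : ∀ w : EuclideanSpace ℝ (Fin 2), dist a w < dist p w ↔
      (a 0 - w 0) ^ 2 + (a 1 - w 1) ^ 2 < (p 0 - w 0) ^ 2 + (p 1 - w 1) ^ 2 := by
    intro w
    rw [EuclideanSpace.dist_eq, EuclideanSpace.dist_eq, Real.sqrt_lt_sqrt_iff (by positivity)]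
    simp [Fin.sum_univ_two, Real.dist_eq]
  obtain ⟨s, t, hs, ht, hst, rfl⟩ := hz
  refine absurd ((key _).2 ?_) (not_lt.2 hp)
  rw [key] at hx hy
  obtain rfl : t = 1 - s := by linarith
  simp only [PiLp.add_apply, PiLp.smul_apply, smul_eq_mul]
  rcases hs.eq_or_lt with rfl | hs'
  · simpa using hy
  · nlinarith [mul_lt_mul_of_pos_left hx hs', mul_le_mul_of_nonneg_left hy.le ht]
end

section
/- (Proposition: circles along a segment.) Let x and y be two points of the plane. If z is a point contained in the segment [x, y], then C(z) ⊆ C(x) ∪ C(y); that is, the closed ball centered at z with radius ρ(z) is contained in the union of the closed ball centered at x with radius ρ(x) and the closed ball centered at y with radius ρ(y). -/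
/-!
By Stewart's identity, for `z = a • x + b • y` with `a + b = 1` the quantity
`a * dist x u ^ 2 + b * dist y u ^ 2 - dist z u ^ 2 = a * b * dist x y ^ 2` does not depend on `u`.
Let `p ∈ P` be a point farthest from `z`. A point `u` lying outside both `C(x)` and `C(y)` is
farther than `p` from each of `x` and `y`, hence also farther than `p` from `z`, so `u ∉ C(z)`.
-/

open Metric

/-- **Stewart's theorem**, in coordinates of the plane. -/
lemma stewart_identity (x y u : EuclideanSpace ℝ (Fin 2)) {a b : ℝ} (hab : a + b = 1) :
    a * dist x u ^ 2 + b * dist y u ^ 2 = dist (a • x + b • y) u ^ 2 + a * b * dist x y ^ 2 := by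
  obtain rfl : b = 1 - a := by linarith
  simp only [EuclideanSpace.dist_sq_eq, Fin.sum_univ_two, Real.dist_eq, sq_abs, PiLp.add_apply,
    PiLp.smul_apply, smul_eq_mul]
  ring

theorem stmt_2 (P : Finset (EuclideanSpace ℝ (Fin 2))) (hP : P.Nonempty)
    (ρ : EuclideanSpace ℝ (Fin 2) → ℝ)
    (hρ : ∀ w, ρ w = P.sup' hP fun p => dist w p)
    (x y z : EuclideanSpace ℝ (Fin 2)) (hz : z ∈ segment ℝ x y) :
    closedBall z (ρ z) ⊆ closedBall x (ρ x) ∪ closedBall y (ρ y) := by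
  obtain ⟨a, b, ha, hb, hab, rfl⟩ := hz
  intro u hu
  by_contra hcon
  simp only [Set.mem_union, mem_closedBall', not_or, not_le] at hcon hu
  obtain ⟨hx, hy⟩ := hcon
  obtain ⟨p, hp, hpz⟩ := P.exists_mem_eq_sup' hP fun p => dist (a • x + b • y) p
  rw [hρ, hpz] at hu
  have le_rho (w) : dist w p ≤ ρ w := by
    rw [hρ]
    exact Finset.le_sup' (fun p => dist w p) hp
  have hx2 : dist x p ^ 2 < dist x u ^ 2 :=
    pow_lt_pow_left₀ ((le_rho x).trans_lt hx) dist_nonneg two_ne_zero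
  have hy2 : dist y p ^ 2 < dist y u ^ 2 :=
    pow_lt_pow_left₀ ((le_rho y).trans_lt hy) dist_nonneg two_ne_zero
  have hz2 : dist (a • x + b • y) u ^ 2 ≤ dist (a • x + b • y) p ^ 2 :=
    pow_le_pow_left₀ dist_nonneg hu 2
  have hu' := stewart_identity x y u hab
  have hp' := stewart_identity x y p hab
  have hax := mul_le_mul_of_nonneg_left hx2.le ha
  have hby := mul_le_mul_of_nonneg_left hy2.le hb
  -- At least one of the two weights is positive, which makes the averaged inequality strict.
  rcases ha.lt_or_eq with ha' | rfl
  · linarith [mul_lt_mul_of_pos_left hx2 ha']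
  · have hb' : 0 < b := by linarith
    linarith [mul_lt_mul_of_pos_left hy2 hb']
end

section
/- (Convexity of the set of separating points.) If x and y are separating points, i.e., the open ball of radius ρ(x) centered at x and the open ball of radius ρ(y) centered at y are both disjoint from Q, then every point z of the segment [x, y] is a separating point: the open ball of radius ρ(z) centered at z is disjoint from Q. -/
open Metric

/-!
If `q ∈ Q` lay in the open ball around `z`, pick `p ∈ P` realizing `ρ z`, so that `z` is strictly
closer to `q` than to `p`. The points at least as close to `p` as to `q` form a half-plane
(`w ↦ dist w q ^ 2 - dist w p ^ 2` is affine), so one of the endpoints `x`, `y` is also strictly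
closer to `q` than to `p`; then `q` lies in the open ball around that endpoint, a contradiction.
-/

/-- The half-plane of points at least as close to `p` as to `q` is convex. -/
lemma dist_le_dist_of_mem_segment {p q x y z : EuclideanSpace ℝ (Fin 2)}
    (hx : dist x p ≤ dist x q) (hy : dist y p ≤ dist y q) (hz : z ∈ segment ℝ x y) :
    dist z p ≤ dist z q := by
  obtain ⟨a, b, ha, hb, hab, rfl⟩ := hz
  obtain rfl : b = 1 - a := by linarith
  rw [← sq_le_sq₀ dist_nonneg dist_nonneg] at hx hy ⊢
  simp only [EuclideanSpace.dist_sq_eq, Real.dist_eq, sq_abs, Fin.sum_univ_two, PiLp.add_apply,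
    PiLp.smul_apply, smul_eq_mul] at hx hy ⊢
  linear_combination a * hx + (1 - a) * hy

theorem stmt_4 (P : Finset (EuclideanSpace ℝ (Fin 2))) (hP : P.Nonempty)
    (Q : Set (EuclideanSpace ℝ (Fin 2)))
    (ρ : EuclideanSpace ℝ (Fin 2) → ℝ)
    (hρ : ∀ w, ρ w = P.sup' hP fun p => dist w p)
    (x y : EuclideanSpace ℝ (Fin 2))
    (hx : Disjoint (ball x (ρ x)) Q) (hy : Disjoint (ball y (ρ y)) Q) :
    ∀ z ∈ segment ℝ x y, Disjoint (ball z (ρ z)) Q := by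
  intro z hz
  rw [Set.disjoint_left]
  intro q hq hqQ
  obtain ⟨p, hp, hzp⟩ := P.exists_mem_eq_sup' hP fun p => dist z p
  have hle : ∀ w, Disjoint (ball w (ρ w)) Q → dist w p ≤ dist w q := by
    intro w hw
    have h1 : dist w p ≤ ρ w := by
      rw [hρ]
      exact P.le_sup' (fun p => dist w p) hp
    have h2 : ρ w ≤ dist w q := by
      by_contra! h
      exact Set.disjoint_left.mp hw (mem_ball'.mpr h) hqQ
    exact h1.trans h2
  rw [mem_ball', hρ, hzp] at hq
  exact absurd (dist_le_dist_of_mem_segment (hle x hx) (hle y hy) hz) (not_le.mpr hq)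
end

section
/- (Existence of the minimum separating circle.) If there exists at least one separating point, then there exists a separating point c* of minimum radius: c* is a separating point and ρ(c*) ≤ ρ(c) for every separating point c. -/
open Metric

/-!
The function `ρ` is continuous, being a finite maximum of distances, and the set of separating
points is `{c | ∀ q ∈ Q, ρ c ≤ dist q c}`, hence closed. Fix `p₀ ∈ P` and a separating point `c₀`.
Since `dist c p₀ ≤ ρ c`, every separating point with `ρ c ≤ ρ c₀` lies in the closed ball of radius
`ρ c₀` around `p₀`, which is compact. So `ρ` attains its minimum over the separating points in this
ball, and that minimum is global.
-/

theorem stmt_7 (P : Finset (EuclideanSpace ℝ (Fin 2))) (hP : P.Nonempty)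
    (Q : Set (EuclideanSpace ℝ (Fin 2)))
    (ρ : EuclideanSpace ℝ (Fin 2) → ℝ)
    (hρ : ∀ w, ρ w = P.sup' hP fun p => dist w p)
    (hex : ∃ c, Disjoint (ball c (ρ c)) Q) :
    ∃ c', Disjoint (ball c' (ρ c')) Q ∧
      ∀ c, Disjoint (ball c (ρ c)) Q → ρ c' ≤ ρ c := by
  have hcont : Continuous ρ := by
    rw [funext hρ]
    exact Continuous.finset_sup'_apply hP fun p _ => by fun_prop
  have hsep : ∀ c, Disjoint (ball c (ρ c)) Q ↔ ∀ q ∈ Q, ρ c ≤ dist q c := by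
    intro c
    rw [Set.disjoint_right]
    simp only [mem_ball, not_lt]
  have hclosed : IsClosed {c | ∀ q ∈ Q, ρ c ≤ dist q c} := by
    simp only [Set.ofPred_forall]
    exact isClosed_biInter fun q _ => isClosed_le hcont (by fun_prop)
  simp only [hsep] at hex ⊢
  obtain ⟨c₀, hc₀⟩ := hex
  obtain ⟨p₀, hp₀⟩ := hP
  have hdist : ∀ c, dist c p₀ ≤ ρ c := fun c => by
    rw [hρ]
    exact Finset.le_sup' (fun p => dist c p) hp₀
  obtain ⟨c', ⟨-, hc'⟩, hmin⟩ :=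
    ((isCompact_closedBall p₀ (ρ c₀)).inter_right hclosed).exists_isMinOn
      ⟨c₀, mem_closedBall.2 (hdist c₀), hc₀⟩ hcont.continuousOn
  refine ⟨c', hc', fun c hc => ?_⟩
  rcases le_total (ρ c) (ρ c₀) with h | h
  · exact hmin ⟨mem_closedBall.2 ((hdist c).trans h), hc⟩
  · exact le_trans (hmin ⟨mem_closedBall.2 (hdist c₀), hc₀⟩) h
end

section
/- (Uniqueness of the minimum separating circle.) If x and y are both separating points of minimum radius — i.e., x and y are separating points and for every separating point c one has ρ(x) ≤ ρ(c) and ρ(y) ≤ ρ(c) — then x = y. -/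
/-!
Both minimizers have the same radius `r`. If `x ≠ y`, let `m` be their midpoint. By Apollonius'
identity `dist m z ^ 2` is the mean of `dist x z ^ 2` and `dist y z ^ 2` minus
`(dist x y / 2) ^ 2`. For `z ∈ P` this gives `ρ m ^ 2 ≤ r ^ 2 - (dist x y / 2) ^ 2 < r ^ 2`. For `z`
outside both balls about `x` and `y` it gives `dist m z ^ 2 ≥ r ^ 2 - (dist x y / 2) ^ 2`, so the
ball about `m` lies in the union of the other two. Hence `m` is a separating point of smaller
radius, a contradiction.
-/

open Metric

/-- Apollonius' identity for the median from `z` to the midpoint of `x` and `y`. -/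
lemma dist_sq_add_dist_sq_midpoint (x y z : EuclideanSpace ℝ (Fin 2)) :
    dist x z ^ 2 + dist y z ^ 2 = 2 * dist (midpoint ℝ x y) z ^ 2 + dist x y ^ 2 / 2 := by
  have h := EuclideanGeometry.dist_sq_add_dist_sq_eq_two_mul_dist_midpoint_sq_add_half_dist_sq z x y
  rw [dist_comm x z, dist_comm y z, dist_comm _ z]
  linarith

theorem stmt_8 (P : Finset (EuclideanSpace ℝ (Fin 2))) (hP : P.Nonempty)
    (Q : Set (EuclideanSpace ℝ (Fin 2)))
    (ρ : EuclideanSpace ℝ (Fin 2) → ℝ)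
    (hρ : ∀ w, ρ w = P.sup' hP fun p => dist w p)
    (x y : EuclideanSpace ℝ (Fin 2))
    (hx : Disjoint (ball x (ρ x)) Q) (hy : Disjoint (ball y (ρ y)) Q)
    (hxmin : ∀ c, Disjoint (ball c (ρ c)) Q → ρ x ≤ ρ c)
    (hymin : ∀ c, Disjoint (ball c (ρ c)) Q → ρ y ≤ ρ c) :
    x = y := by
  by_contra hne
  have hd : 0 < dist x y := dist_pos.mpr hne
  have hxy : ρ y = ρ x := le_antisymm (hymin x hx) (hxmin y hy)
  have hle : ∀ w, ∀ p ∈ P, dist w p ≤ ρ w := fun w p hp => by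
    rw [hρ]
    exact Finset.le_sup' (fun p => dist w p) hp
  -- A farthest point of `P` from the midpoint realizes `ρ (midpoint ℝ x y)`.
  obtain ⟨p, hp, hpm⟩ := Finset.exists_mem_eq_sup' hP fun p => dist (midpoint ℝ x y) p
  rw [← hρ] at hpm
  have hap := dist_sq_add_dist_sq_midpoint x y p
  have hpx : dist x p ^ 2 ≤ ρ x ^ 2 := pow_le_pow_left₀ dist_nonneg (hle x p hp) 2
  have hpy : dist y p ^ 2 ≤ ρ x ^ 2 := pow_le_pow_left₀ dist_nonneg (hxy ▸ hle y p hp) 2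
  have hx0 : 0 ≤ ρ x := dist_nonneg.trans (hle x p hp)
  rw [← hpm] at hap
  have hlt : ρ (midpoint ℝ x y) < ρ x := lt_of_pow_lt_pow_left₀ 2 hx0 (by nlinarith)
  refine absurd (hxmin (midpoint ℝ x y) (Set.disjoint_left.mpr fun z hz hzQ => ?_)) hlt.not_ge
  have hzx : ρ x ≤ dist x z := by
    by_contra! h
    exact Set.disjoint_left.mp hx (mem_ball'.mpr h) hzQ
  have hzy : ρ x ≤ dist y z := by
    by_contra! h
    exact Set.disjoint_left.mp hy (mem_ball'.mpr (hxy ▸ h)) hzQ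
  have haz := dist_sq_add_dist_sq_midpoint x y z
  have hzm : dist (midpoint ℝ x y) z ^ 2 < ρ (midpoint ℝ x y) ^ 2 :=
    pow_lt_pow_left₀ (mem_ball'.mp hz) dist_nonneg two_ne_zero
  have hzx2 := pow_le_pow_left₀ hx0 hzx 2
  have hzy2 := pow_le_pow_left₀ hx0 hzy 2
  linarith
end

section
/- (The minimum separating circle passes through at least two points of P.) Suppose P has at least two points, and let c* be a separating point of minimum radius: c* is a separating point and ρ(c*) ≤ ρ(c) for every separating point c. Then at least two points of P lie on the boundary circle, i.e., the set {p ∈ P : dist(c*, p) = ρ(c*)} has at least two elements. -/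
/-!
If only one point `p₀ ∈ P` lay on the circle, the center could be moved slightly from `c`
towards `p₀`. For a small enough move `p₀` stays a farthest point, so `ρ` drops by exactly the
distance moved, and the new ball is internally tangent to the old one, hence contained in it and
still disjoint from `Q`. This contradicts the minimality of `ρ c`.
-/

open Metric

theorem stmt_9 (P : Finset (EuclideanSpace ℝ (Fin 2))) (hP : P.Nonempty)
    (hP2 : 2 ≤ P.card)
    (Q : Set (EuclideanSpace ℝ (Fin 2)))
    (ρ : EuclideanSpace ℝ (Fin 2) → ℝ)
    (hρ : ∀ w, ρ w = P.sup' hP fun p => dist w p)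
    (c : EuclideanSpace ℝ (Fin 2))
    (hc : Disjoint (ball c (ρ c)) Q)
    (hmin : ∀ c', Disjoint (ball c' (ρ c')) Q → ρ c ≤ ρ c') :
    2 ≤ {p ∈ (P : Set (EuclideanSpace ℝ (Fin 2))) | dist c p = ρ c}.ncard := by
  have hle : ∀ w, ∀ p ∈ P, dist w p ≤ ρ w := fun w p hp => by
    rw [hρ]; exact Finset.le_sup' (fun p => dist w p) hp
  obtain ⟨p₀, hp₀, hp₀c⟩ := Finset.exists_mem_eq_sup' hP fun p => dist c p
  rw [← hρ] at hp₀c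
  have hfin : {p ∈ (P : Set (EuclideanSpace ℝ (Fin 2))) | dist c p = ρ c}.Finite :=
    P.finite_toSet.subset fun _ h => h.1
  by_contra hcard
  have hlt : ∀ q ∈ P, q ≠ p₀ → dist c q < ρ c := by
    intro q hq hne
    refine lt_of_le_of_ne (hle c q hq) fun heq => hcard ?_
    exact (Set.one_lt_ncard hfin).2 ⟨q, ⟨hq, heq⟩, p₀, ⟨hp₀, hp₀c.symm⟩, hne⟩
  have hE : (P.erase p₀).Nonempty := by
    rw [← Finset.card_pos, Finset.card_erase_of_mem hp₀]; omega
  -- `q₁` is a second-farthest point; the gap `ρ c - dist c q₁` bounds how far `c` may move.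
  obtain ⟨q₁, hq₁, hmax⟩ := (P.erase p₀).exists_max_image (fun q => dist c q) hE
  have hq₁lt := hlt q₁ (Finset.mem_of_mem_erase hq₁) (Finset.ne_of_mem_erase hq₁)
  have hq₁0 : 0 ≤ dist c q₁ := dist_nonneg
  have hpos : 0 < ρ c := hq₁0.trans_lt hq₁lt
  -- Moving by half the gap makes the bounds for `p₀` and for the other points agree.
  obtain ⟨t, ht⟩ : ∃ t, t = (ρ c - dist c q₁) / (2 * ρ c) := ⟨_, rfl⟩
  have htρ : t * ρ c = (ρ c - dist c q₁) / 2 := by rw [ht]; field_simp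
  have ht0 : 0 < t := by rw [ht]; apply div_pos <;> linarith
  have ht1 : t ≤ 1 := by rw [ht, div_le_one (by linarith)]; linarith
  obtain ⟨c', hc'⟩ : ∃ c', c' = AffineMap.lineMap c p₀ t := ⟨_, rfl⟩
  have hcc' : dist c' c = t * ρ c := by
    rw [hc', dist_lineMap_left, ← hp₀c, Real.norm_of_nonneg ht0.le]
  have hc'p : dist c' p₀ = (1 - t) * ρ c := by
    rw [hc', dist_lineMap_right, ← hp₀c, Real.norm_of_nonneg (by linarith)]
  have hρ' : ρ c' ≤ (1 - t) * ρ c := by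
    rw [hρ c']
    refine Finset.sup'_le _ _ fun q hq => ?_
    by_cases hqp : q = p₀
    · rw [hqp, hc'p]
    · have h1 := hmax q (Finset.mem_erase.2 ⟨hqp, hq⟩)
      have h2 := dist_triangle c' c q
      linarith
  have hsub : ball c' (ρ c') ⊆ ball c (ρ c) := ball_subset_ball' (by linarith)
  have := hmin c' (hc.mono_left hsub)
  nlinarith [mul_pos ht0 hpos]
end

section
/- (Observation: pushing circles along a bisector.) Let p ≠ p' be points of the plane, let m be their midpoint, and let u be a nonzero vector orthogonal to p' − p. Let x = m + s • u and y = m + t • u with s ≥ t ≥ 0 (so x and y lie on the perpendicular bisector of p and p', on the same side of the line through p and p', with dist(x, p) ≥ dist(y, p)). For a point z on the bisector define C⁺(z) = closedBall(z, dist(z, p)) ∩ {w : ⟪w − m, u⟫ ≤ 0} and C⁻(z) = closedBall(z, dist(z, p)) ∩ {w : ⟪w − m, u⟫ ≥ 0}. Then C⁺(x) ⊆ C⁺(y) and C⁻(y) ⊆ C⁻(x). -/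
/-!
Put the origin at `m`. Since `p - m` is orthogonal to `u`, the disc centred at `m + r • u` through
`p` is `{w | ‖w - m‖² - 2 r ⟪w - m, u⟫ ≤ ‖p - m‖²}` (`mem_closedBall_bisector_iff`): the quadratic
terms in `r` cancel. The left-hand side is monotone in `r` on the half-plane `⟪w - m, u⟫ ≤ 0` and
antitone on the opposite one, which gives the two inclusions.
-/

open Metric RealInnerProductSpace

/-- The disc through `p` centred at a point of the line `m + ℝ u` orthogonal to `p - m` is cut out
by an inequality that is affine in the parameter `r` of the centre. -/
theorem mem_closedBall_bisector_iff {E : Type*} [NormedAddCommGroup E] [InnerProductSpace ℝ E]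
    {p m u : E} (h : ⟪p - m, u⟫ = 0) (r : ℝ) (w : E) :
    w ∈ closedBall (m + r • u) (dist (m + r • u) p) ↔
      ‖w - m‖ ^ 2 - 2 * (r * ⟪w - m, u⟫) ≤ ‖p - m‖ ^ 2 := by
  have key : ∀ z : E, ‖z - (m + r • u)‖ ^ 2 =
      ‖z - m‖ ^ 2 - 2 * (r * ⟪z - m, u⟫) + ‖r • u‖ ^ 2 := fun z => by
    rw [← sub_sub, norm_sub_sq_real, real_inner_smul_right]
  rw [mem_closedBall, dist_comm _ p, dist_eq_norm, dist_eq_norm,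
    ← sq_le_sq₀ (norm_nonneg _) (norm_nonneg _), key w, key p, h]
  constructor <;> intro _ <;> linarith

theorem stmt_12 (p p' : EuclideanSpace ℝ (Fin 2)) (hpp' : p ≠ p')
    (m : EuclideanSpace ℝ (Fin 2)) (hm : m = midpoint ℝ p p')
    (u : EuclideanSpace ℝ (Fin 2)) (hu : u ≠ 0) (huo : ⟪u, p' - p⟫ = 0)
    (s t : ℝ) (hts : t ≤ s) (ht : 0 ≤ t)
    (x y : EuclideanSpace ℝ (Fin 2)) (hx : x = m + s • u) (hy : y = m + t • u) :
    closedBall x (dist x p) ∩ {w | ⟪w - m, u⟫ ≤ 0} ⊆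
        closedBall y (dist y p) ∩ {w | ⟪w - m, u⟫ ≤ 0} ∧
      closedBall y (dist y p) ∩ {w | ⟪w - m, u⟫ ≥ 0} ⊆
        closedBall x (dist x p) ∩ {w | ⟪w - m, u⟫ ≥ 0} := by
  have h : ⟪p - m, u⟫ = 0 := by
    have e : p - m = (-(1 / 2) : ℝ) • (p' - p) := by
      rw [hm, midpoint_eq_smul_add, invOf_eq_inv]
      module
    rw [e, real_inner_smul_left, real_inner_comm, huo, mul_zero]
  subst hx hy
  constructor
  · rintro w ⟨hw, hs⟩
    refine ⟨?_, hs⟩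
    rw [mem_closedBall_bisector_iff h] at hw ⊢
    linarith [mul_le_mul_of_nonpos_right hts hs]
  · rintro w ⟨hw, hs⟩
    refine ⟨?_, hs⟩
    rw [mem_closedBall_bisector_iff h] at hw ⊢
    linarith [mul_le_mul_of_nonneg_right hts hs]
end

section
/- (A strict separating line yields a separating circle.) Let v be a unit vector of the plane and b a real number such that ⟪p, v⟫ < b for every p ∈ P. Then there exists a point c such that the entire closed ball of radius ρ(c) centered at c lies strictly on the same side: ⟪w, v⟫ < b for every w with dist(w, c) ≤ ρ(c). In particular, if additionally ⟪q, v⟫ ≥ b for every q ∈ Q, then c is a separating point. -/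
open Metric RealInnerProductSpace

/-!
Push the center far away from the line, to `c = -t • v` with `t` large. Its distance to the line
`⟪·, v⟫ = b` is `b + t`, and for a point `p` strictly on the near side the inequality
`dist c p < b + t` is, after squaring, `‖p‖ ^ 2 - b ^ 2 < 2 * t * (b - ⟪p, v⟫)`, which holds for
all large `t`. As `P` is finite, one `t` serves all its points; then `ρ c < b + t`, and
Cauchy–Schwarz keeps the closed disk strictly on the near side of the line.
-/

/-- The disk around `-t • v` tangent to the line `⟪·, v⟫ = b` swallows, as `t → ∞`, every point
strictly on its side of the line. -/
lemma eventually_dist_lt (v p : EuclideanSpace ℝ (Fin 2)) (hv : ‖v‖ = 1) (b : ℝ)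
    (hp : ⟪p, v⟫ < b) : ∀ᶠ t : ℝ in Filter.atTop, dist (-(t • v)) p < b + t := by
  filter_upwards [Filter.eventually_gt_atTop (-b),
    Filter.eventually_gt_atTop ((‖p‖ ^ 2 - b ^ 2) / (2 * (b - ⟪p, v⟫)))] with t ht₁ ht₂
  rw [div_lt_iff₀ (by linarith)] at ht₂
  rw [dist_comm, dist_eq_norm, sub_neg_eq_add]
  have h : ‖p + t • v‖ ^ 2 = ‖p‖ ^ 2 + 2 * (t * ⟪p, v⟫) + t ^ 2 := by
    rw [norm_add_sq_real, real_inner_smul_right, norm_smul, hv, mul_one, Real.norm_eq_abs, sq_abs]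
  exact lt_of_pow_lt_pow_left₀ 2 (by linarith) (by rw [h]; linarith)

theorem stmt_13 (P : Finset (EuclideanSpace ℝ (Fin 2))) (hP : P.Nonempty)
    (Q : Set (EuclideanSpace ℝ (Fin 2)))
    (ρ : EuclideanSpace ℝ (Fin 2) → ℝ)
    (hρ : ∀ w, ρ w = P.sup' hP fun p => dist w p)
    (v : EuclideanSpace ℝ (Fin 2)) (hv : ‖v‖ = 1) (b : ℝ)
    (hPv : ∀ p ∈ P, ⟪p, v⟫ < b) :
    ∃ c, (∀ w, dist w c ≤ ρ c → ⟪w, v⟫ < b) ∧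
      ((∀ q ∈ Q, b ≤ ⟪q, v⟫) → Disjoint (ball c (ρ c)) Q) := by
  obtain ⟨t, ht⟩ := ((Filter.eventually_all_finset P).2
    fun p hp => eventually_dist_lt v p hv b (hPv p hp)).exists
  have hlt : ρ (-(t • v)) < b + t := by
    rw [hρ, Finset.sup'_lt_iff]
    exact ht
  have hside : ∀ w, dist w (-(t • v)) ≤ ρ (-(t • v)) → ⟪w, v⟫ < b := by
    intro w hw
    have hcs := real_inner_le_norm (w + t • v) v
    rw [inner_add_left, real_inner_smul_left, real_inner_self_eq_norm_sq, hv] at hcs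
    rw [dist_eq_norm, sub_neg_eq_add] at hw
    linarith
  refine ⟨-(t • v), hside, fun hQ => Set.disjoint_left.2 fun w hw hwQ => ?_⟩
  exact (hQ w hwQ).not_gt (hside w (mem_ball.1 hw).le)
end

section
/- (The minimum separating circle touches Q.) Let Q be a closed subset of the plane. Let c₀ be a global minimizer of ρ (the center of the minimum enclosing circle of P): ρ(c₀) ≤ ρ(w) for every point w. Suppose the minimum enclosing circle is not separating, i.e., the open ball of radius ρ(c₀) centered at c₀ intersects Q. Let c* be a separating point of minimum radius: c* is a separating point and ρ(c*) ≤ ρ(c) for every separating point c. Then the closed ball of radius ρ(c*) centered at c* intersects Q. -/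
/-!
Suppose the closed disk at `c` misses `Q`. By compactness, so does its `δ`-thickening for some
`δ > 0`. Since the disk at `c₀` meets `Q`, `c ≠ c₀`. Let `c'` be a point strictly between `c` and
`c₀`, at distance less than `δ` from `c`. Every `p ∈ P` is within `ρ c` of both `c` and
`c₀`, so strict convexity of disks gives `dist c' p < ρ c`, whence `ρ c' < ρ c`. The disk at `c'` lies
in the `δ`-thickening, so `c'` is separating, contradicting the minimality of `c`.
-/

open Metric

theorem stmt_15 (P : Finset (EuclideanSpace ℝ (Fin 2))) (hP : P.Nonempty)
    (Q : Set (EuclideanSpace ℝ (Fin 2))) (hQ : IsClosed Q)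
    (ρ : EuclideanSpace ℝ (Fin 2) → ℝ)
    (hρ : ∀ w, ρ w = P.sup' hP fun p => dist w p)
    (c₀ : EuclideanSpace ℝ (Fin 2)) (hc₀ : ∀ w, ρ c₀ ≤ ρ w)
    (hmeet : (ball c₀ (ρ c₀) ∩ Q).Nonempty)
    (c : EuclideanSpace ℝ (Fin 2))
    (hc : Disjoint (ball c (ρ c)) Q)
    (hmin : ∀ c', Disjoint (ball c' (ρ c')) Q → ρ c ≤ ρ c') :
    (closedBall c (ρ c) ∩ Q).Nonempty := by
  by_contra hempty
  have hsub : closedBall c (ρ c) ⊆ Qᶜ := fun x hx hxQ => hempty ⟨x, hx, hxQ⟩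
  obtain ⟨δ, hδ, hthick⟩ :=
    (isCompact_closedBall c (ρ c)).exists_thickening_subset_open hQ.isOpen_compl hsub
  have hne : c ≠ c₀ := by
    rintro rfl
    obtain ⟨x, hx, hxQ⟩ := hmeet
    exact Set.disjoint_left.mp hc hx hxQ
  have hd : 0 < dist c₀ c := dist_pos.mpr hne.symm
  have hle : ∀ w, ∀ p ∈ P, dist w p ≤ ρ w := fun w p hp => by
    rw [hρ]
    exact Finset.le_sup' (fun p => dist w p) hp
  -- The weight `δ / (δ + d)`, with `d = dist c₀ c`, lies in `(0, 1)` and is less than `δ / d`.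
  set c' := (dist c₀ c / (δ + dist c₀ c)) • c + (δ / (δ + dist c₀ c)) • c₀ with hc'
  have hsum : dist c₀ c / (δ + dist c₀ c) + δ / (δ + dist c₀ c) = 1 := by
    field_simp
    ring
  have hlt : ρ c' < ρ c := by
    rw [hρ c', Finset.sup'_lt_iff]
    intro p hp
    exact combo_mem_ball_of_ne (mem_closedBall.mpr (hle c p hp))
      (mem_closedBall.mpr ((hle c₀ p hp).trans (hc₀ c))) hne (by positivity) (by positivity) hsum
  have hclose : dist c' c < δ := by
    have hdiff : c' - c = (δ / (δ + dist c₀ c)) • (c₀ - c) := by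
      rw [hc', eq_sub_of_add_eq hsum]
      module
    rw [dist_eq_norm c' c, hdiff, norm_smul, ← dist_eq_norm, Real.norm_of_nonneg (by positivity),
      div_mul_eq_mul_div, div_lt_iff₀ (by positivity)]
    nlinarith
  refine absurd (hmin c' (Set.disjoint_left.mpr fun x hx => hthick ?_)) (not_le.mpr hlt)
  -- Translating `x` by `c - c'` carries the disk at `c'` into the disk at `c`.
  refine mem_thickening_iff.mpr ⟨x + (c - c'), ?_, ?_⟩
  · rw [mem_ball, dist_eq_norm] at hx
    rw [mem_closedBall, dist_eq_norm, show x + (c - c') - c = x - c' by abel]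
    exact (hx.trans hlt).le
  · rw [dist_eq_norm, show x - (x + (c - c')) = c' - c by abel, ← dist_eq_norm]
    exact hclose
end
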